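/- Let M ⊆ ℕ be such that |M ∩ {0,…,n}| / (n+1) → δ as n → ∞, where δ ∈ [0,1], and let F_M := {x ∈ ⟦𝕐⟧ : x(n) = 0 for every n ∉ M}. Then dim_H(F_M) = δ. -/

import Mathlib

open Metric Set Filter MeasureTheory

noncomputable local instance : MetricSpace (ℕ → Bool) := PiNat.metricSpace

/-!
`F_M` is a product `∏ A n` of finite sets, and the dimension of any such product is governed by
the number `N n = ∏ i < n, #(A i)` of cylinders of length `n` that meet it. These cylinders cover
the product and have diameter at most `2⁻ⁿ`, so `μH[d]` of it is at most `liminf N n * 2⁻ⁿᵈ`.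
Conversely the product of the uniform measures on the `A i` gives each cylinder of length `n` mass
at most `1 / N n`; if this is eventually at most `2⁻ⁿᵈ`, the mass distribution principle bounds
`μH[d]` below by that measure. Hence the dimension is `liminf log₂ (N n) / n`, which for `F_M` is
the lower density of `M`.
-/

open ProbabilityTheory
open scoped ENNReal NNReal Topology

theorem le_hausdorffMeasure_of_eventually_measure_eball_le {X : Type*} [EMetricSpace X]
    [MeasurableSpace X] [BorelSpace X] {μ : Measure X} {d : ℝ}
    (h : ∀ᶠ r in 𝓝[>] (0 : ℝ≥0∞), ∀ x, μ (eball x r) ≤ r ^ d) : μ ≤ μH[d] := by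
  obtain ⟨ε, hε, hball⟩ := (mem_nhdsGT_iff_exists_Ioo_subset' zero_lt_one).1 h
  obtain ⟨ε', hε', hlt⟩ := exists_between (mem_Ioi.1 hε)
  refine Measure.le_hausdorffMeasure d μ ε' hε' fun s hs ↦ ?_
  obtain rfl | ⟨x, hx⟩ := s.eq_empty_or_nonempty
  · simp
  have hsε : ediam s < ε := hs.trans_lt hlt
  -- Letting `r` decrease to `ediam s` also covers the sets of diameter `0`.
  have : (𝓝[>] ediam s).NeBot := nhdsGT_neBot_of_exists_gt ⟨ε, hsε⟩
  have hlim : Tendsto (fun r : ℝ≥0∞ ↦ r ^ d) (𝓝[>] ediam s) (𝓝 (ediam s ^ d)) :=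
    ENNReal.continuous_rpow_const.continuousWithinAt
  refine ge_of_tendsto hlim ?_
  filter_upwards [Ioo_mem_nhdsGT hsε] with r ⟨hsr, hrε⟩
  have hsub : s ⊆ eball x r := fun y hy ↦ (edist_le_ediam_of_mem hy hx).trans_lt hsr
  exact (measure_mono hsub).trans (hball ⟨zero_le.trans_lt hsr, hrε⟩ x)

theorem uniformOn_singleton_le {Ω : Type*} [MeasurableSpace Ω] [MeasurableSingletonClass Ω]
    (s : Finset Ω) (a : Ω) : uniformOn (s : Set Ω) {a} ≤ (s.card : ℝ≥0∞)⁻¹ := by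
  rw [uniformOn, cond_apply s.measurableSet, Measure.count_apply_finset]
  exact mul_le_of_le_one_right' ((measure_mono inter_subset_right).trans_eq
    (Measure.count_singleton a))

theorem prod_card_ne_zero {ι : Type*} {E : ι → Type*} {A : ∀ i, Finset (E i)}
    (hA : ∀ i, (A i).Nonempty) (s : Finset ι) : ∏ i ∈ s, (A i).card ≠ 0 :=
  Finset.prod_ne_zero_iff.2 fun i _ ↦ (hA i).card_ne_zero

section UniformProduct

variable {ι : Type*} {E : ι → Type*} [∀ i, MeasurableSpace (E i)]
  [∀ i, MeasurableSingletonClass (E i)] {A : ∀ i, Finset (E i)}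

theorem infinitePi_uniformOn_pi_singleton_le (hA : ∀ i, (A i).Nonempty) (s : Finset ι)
    (x : ∀ i, E i) :
    Measure.infinitePi (fun i ↦ uniformOn (A i : Set (E i))) ((s : Set ι).pi fun i ↦ {x i}) ≤
      ((∏ i ∈ s, (A i).card : ℕ) : ℝ≥0∞)⁻¹ := by
  have (i : ι) : IsProbabilityMeasure (uniformOn (A i : Set (E i))) :=
    isProbabilityMeasure_uniformOn (A i).finite_toSet (hA i)
  calc Measure.infinitePi (fun i ↦ uniformOn (A i : Set (E i))) ((s : Set ι).pi fun i ↦ {x i})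
      = ∏ i ∈ s, uniformOn (A i : Set (E i)) {x i} :=
        Measure.infinitePi_pi _ fun _ _ ↦ measurableSet_singleton _
    _ ≤ ∏ i ∈ s, ((A i).card : ℝ≥0∞)⁻¹ :=
        Finset.prod_le_prod' fun i _ ↦ uniformOn_singleton_le (A i) (x i)
    _ = ((∏ i ∈ s, (A i).card : ℕ) : ℝ≥0∞)⁻¹ := by
        rw [Nat.cast_prod, ENNReal.prod_inv_distrib]
        exact fun _ _ _ _ _ ↦ .inr (ENNReal.natCast_ne_top _)

theorem infinitePi_uniformOn_univ_pi [Countable ι] (hA : ∀ i, (A i).Nonempty) :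
    Measure.infinitePi (fun i ↦ uniformOn (A i : Set (E i)))
      (univ.pi fun i ↦ (A i : Set (E i))) = 1 := by
  have (i : ι) : IsProbabilityMeasure (uniformOn (A i : Set (E i))) :=
    isProbabilityMeasure_uniformOn (A i).finite_toSet (hA i)
  rw [Measure.infinitePi_pi_univ _ fun i ↦ (A i).measurableSet]
  simp only [uniformOn_self (A _).finite_toSet (hA _), tprod_one]

end UniformProduct

theorem inv_two_pow_eq_ofReal (n : ℕ) : (2⁻¹ : ℝ≥0∞) ^ n = ENNReal.ofReal ((1 / 2) ^ n) := by
  rw [ENNReal.ofReal_pow (by positivity), one_div, ENNReal.ofReal_inv_of_pos two_pos,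
    ENNReal.ofReal_ofNat]

theorem natCast_mul_inv_two_pow_rpow {k : ℕ} (hk : k ≠ 0) (n : ℕ) (d : ℝ) :
    (k : ℝ≥0∞) * (2⁻¹ ^ n) ^ d = 2 ^ (Real.logb 2 k - n * d) := by
  have hk' : (k : ℝ≥0∞) = 2 ^ Real.logb 2 k := by
    rw [← ENNReal.ofReal_natCast, ← ENNReal.ofReal_ofNat, ENNReal.ofReal_rpow_of_pos two_pos,
      Real.rpow_logb two_pos (by norm_num) (by positivity)]
  rw [sub_eq_add_neg, ENNReal.rpow_add _ _ two_ne_zero ENNReal.ofNat_ne_top, ← hk',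
    ENNReal.rpow_neg, ENNReal.rpow_mul, ENNReal.rpow_natCast, ← ENNReal.inv_rpow, ENNReal.inv_pow]

theorem natCast_mul_inv_two_pow_rpow_le_one {k n : ℕ} {d : ℝ} (hk : k ≠ 0) (hn : 0 < n)
    (h : Real.logb 2 k / n ≤ d) : (k : ℝ≥0∞) * (2⁻¹ ^ n) ^ d ≤ 1 := by
  rw [natCast_mul_inv_two_pow_rpow hk, ← ENNReal.rpow_zero (x := 2)]
  refine ENNReal.rpow_le_rpow_of_exponent_le one_le_two (sub_nonpos.2 ?_)
  exact (div_le_iff₀' (by positivity)).1 h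

theorem one_le_natCast_mul_inv_two_pow_rpow {k n : ℕ} {d : ℝ} (hk : k ≠ 0) (hn : 0 < n)
    (h : d ≤ Real.logb 2 k / n) : 1 ≤ (k : ℝ≥0∞) * (2⁻¹ ^ n) ^ d := by
  rw [natCast_mul_inv_two_pow_rpow hk, ← ENNReal.rpow_zero (x := 2)]
  refine ENNReal.rpow_le_rpow_of_exponent_le one_le_two (sub_nonneg.2 ?_)
  exact (le_div_iff₀' (by positivity)).1 h

section Product

variable {E : ℕ → Type*} [∀ n, TopologicalSpace (E n)] [∀ n, DiscreteTopology (E n)]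

attribute [local instance] PiNat.metricSpace

theorem mem_cylinder_iff_edist_le {x y : ∀ n, E n} {n : ℕ} :
    y ∈ PiNat.cylinder x n ↔ edist y x ≤ 2⁻¹ ^ n := by
  rw [inv_two_pow_eq_ofReal, edist_le_ofReal (by positivity)]
  exact PiNat.mem_cylinder_iff_dist_le

theorem eball_subset_cylinder_succ (x : ∀ n, E n) (n : ℕ) :
    eball x (2⁻¹ ^ n) ⊆ PiNat.cylinder x (n + 1) := by
  intro y hy i hi
  rw [mem_eball, inv_two_pow_eq_ofReal, edist_lt_ofReal] at hy
  exact PiNat.apply_eq_of_dist_lt hy (Nat.lt_succ_iff.1 hi)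

theorem exists_eball_subset_cylinder {r : ℝ≥0∞} (hr₀ : 0 < r) (hr₁ : r ≤ 1) :
    ∃ n : ℕ, 2⁻¹ ^ n ≤ r ∧ ∀ x : ∀ n, E n, eball x r ⊆ PiNat.cylinder x n := by
  lift r to ℝ≥0 using ne_top_of_le_ne_top ENNReal.one_ne_top hr₁
  obtain ⟨n, hlt, hle⟩ := exists_nat_pow_near_of_lt_one (y := (2⁻¹ : ℝ≥0))
    (by exact_mod_cast hr₀) (by exact_mod_cast hr₁) (by norm_num) (by norm_num)
  have hlt' : (2⁻¹ : ℝ≥0∞) ^ (n + 1) < r := by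
    rw [← ENNReal.coe_inv_two]; exact_mod_cast hlt
  have hle' : (r : ℝ≥0∞) ≤ 2⁻¹ ^ n := by
    rw [← ENNReal.coe_inv_two]; exact_mod_cast hle
  exact ⟨n + 1, hlt'.le, fun x ↦ (eball_subset_eball hle').trans (eball_subset_cylinder_succ x n)⟩

theorem hausdorffMeasure_univ_pi_le_liminf [MeasurableSpace (∀ n, E n)] [BorelSpace (∀ n, E n)]
    (A : ∀ n, Finset (E n)) {d : ℝ} (hd : 0 ≤ d) :
    μH[d] (univ.pi fun n ↦ (A n : Set (E n))) ≤
      liminf (fun n ↦ ((∏ i ∈ Finset.range n, (A i).card : ℕ) : ℝ≥0∞) * (2⁻¹ ^ n) ^ d) atTop := by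
  let t (n : ℕ) (w : ∀ i : Fin n, A i) : Set (∀ n, E n) := {x | ∀ i : Fin n, x i = w i}
  have hdiam (n : ℕ) (w : ∀ i : Fin n, A i) : ediam (t n w) ≤ 2⁻¹ ^ n :=
    ediam_le fun x hx y hy ↦ mem_cylinder_iff_edist_le.1
      fun i hi ↦ (hx ⟨i, hi⟩).trans (hy ⟨i, hi⟩).symm
  have hcover (n : ℕ) : (univ.pi fun n ↦ (A n : Set (E n))) ⊆ ⋃ w, t n w := fun x hx ↦
    mem_iUnion.2 ⟨fun i ↦ ⟨x i, hx i trivial⟩, fun _ ↦ rfl⟩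
  refine (Measure.hausdorffMeasure_le_liminf_sum d _ (fun n : ℕ ↦ (2⁻¹ : ℝ≥0∞) ^ n)
    (ENNReal.tendsto_pow_atTop_nhds_zero_of_lt_one (by simp)) t (.of_forall hdiam)
    (.of_forall hcover)).trans (liminf_le_liminf (.of_forall fun n ↦ ?_))
  calc ∑ w, ediam (t n w) ^ d
      ≤ ∑ _w : ∀ i : Fin n, A i, ((2⁻¹ : ℝ≥0∞) ^ n) ^ d :=
        Finset.sum_le_sum fun w _ ↦ ENNReal.rpow_le_rpow (hdiam n w) hd
    _ = ((∏ i ∈ Finset.range n, (A i).card : ℕ) : ℝ≥0∞) * (2⁻¹ ^ n) ^ d := by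
        simp [Fintype.card_pi, Finset.prod_range]

section Measure

variable [∀ n, MeasurableSpace (E n)] [∀ n, BorelSpace (E n)] [∀ n, Countable (E n)]

theorem le_hausdorffMeasure_of_eventually_measure_cylinder_le {μ : Measure (∀ n, E n)} {d : ℝ}
    (hd : 0 ≤ d) (h : ∀ᶠ n in atTop, ∀ x, μ (PiNat.cylinder x n) ≤ (2⁻¹ ^ n) ^ d) :
    μ ≤ μH[d] := by
  obtain ⟨N, hN⟩ := eventually_atTop.1 h
  refine le_hausdorffMeasure_of_eventually_measure_eball_le ?_
  filter_upwards [Ioo_mem_nhdsGT (ENNReal.pow_pos (by simp) N : 0 < (2⁻¹ : ℝ≥0∞) ^ N)]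
    with r ⟨hr₀, hrN⟩ x
  obtain ⟨n, hnr, hball⟩ := exists_eball_subset_cylinder (E := E) hr₀
    (hrN.le.trans (pow_le_one' (by simp) N))
  have hn : N ≤ n := le_of_not_ge fun hle ↦
    ((hnr.trans_lt hrN).trans_le (pow_le_pow_right_of_le_one' (by simp) hle)).false
  calc μ (eball x r) ≤ μ (PiNat.cylinder x n) := measure_mono (hball x)
    _ ≤ (2⁻¹ ^ n) ^ d := hN n hn x
    _ ≤ r ^ d := ENNReal.rpow_le_rpow hnr hd

theorem one_le_hausdorffMeasure_univ_pi {A : ∀ n, Finset (E n)} (hA : ∀ n, (A n).Nonempty)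
    {d : ℝ} (hd : 0 ≤ d)
    (h : ∀ᶠ n in atTop,
      1 ≤ ((∏ i ∈ Finset.range n, (A i).card : ℕ) : ℝ≥0∞) * (2⁻¹ ^ n) ^ d) :
    1 ≤ μH[d] (univ.pi fun n ↦ (A n : Set (E n))) := by
  rw [← infinitePi_uniformOn_univ_pi hA]
  refine le_hausdorffMeasure_of_eventually_measure_cylinder_le hd ?_ _
  filter_upwards [h] with n hn x
  rw [PiNat.cylinder_eq_pi]
  refine (infinitePi_uniformOn_pi_singleton_le hA _ x).trans ?_
  rwa [ENNReal.inv_le_iff_le_mul (by simp) (by simp)]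

end Measure

theorem dimH_univ_pi_le {A : ∀ n, Finset (E n)} (hA : ∀ n, (A n).Nonempty) :
    dimH (univ.pi fun n ↦ (A n : Set (E n))) ≤
      liminf (fun n : ℕ ↦ ENNReal.ofReal
        (Real.logb 2 (∏ i ∈ Finset.range n, (A i).card : ℕ) / n)) atTop := by
  borelize (∀ n, E n)
  refine le_of_forall_gt_imp_ge_of_dense fun c hc ↦ ?_
  obtain ⟨d, hd, hdc⟩ := ENNReal.lt_iff_exists_nnreal_btwn.1 hc
  refine (dimH_le_of_hausdorffMeasure_ne_top (ne_top_of_le_ne_top ENNReal.one_ne_top ?_)).trans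
    hdc.le
  refine (hausdorffMeasure_univ_pi_le_liminf A d.2).trans (liminf_le_of_frequently_le' ?_)
  refine ((frequently_lt_of_liminf_lt isCobounded_ge_of_top hd).and_eventually
    (eventually_gt_atTop 0)).mono fun n ⟨hlt, hn⟩ ↦ ?_
  refine natCast_mul_inv_two_pow_rpow_le_one (prod_card_ne_zero hA _) hn ?_
  exact ENNReal.ofReal_le_coe.1 hlt.le

theorem le_dimH_univ_pi [∀ n, Countable (E n)] {A : ∀ n, Finset (E n)}
    (hA : ∀ n, (A n).Nonempty) :
    liminf (fun n : ℕ ↦ ENNReal.ofReal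
      (Real.logb 2 (∏ i ∈ Finset.range n, (A i).card : ℕ) / n)) atTop ≤
      dimH (univ.pi fun n ↦ (A n : Set (E n))) := by
  let (n : ℕ) : MeasurableSpace (E n) := borel (E n)
  have (n : ℕ) : BorelSpace (E n) := ⟨rfl⟩
  refine ENNReal.le_of_forall_nnreal_lt fun d hd ↦ ?_
  refine le_dimH_of_hausdorffMeasure_ne_zero (one_pos.trans_le ?_).ne'
  refine one_le_hausdorffMeasure_univ_pi hA d.2 ?_
  filter_upwards [eventually_lt_of_lt_liminf hd, eventually_gt_atTop 0] with n hlt hn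
  refine one_le_natCast_mul_inv_two_pow_rpow (prod_card_ne_zero hA _) hn ?_
  exact (ENNReal.coe_lt_ofReal.1 hlt).le

theorem dimH_univ_pi [∀ n, Countable (E n)] {A : ∀ n, Finset (E n)} (hA : ∀ n, (A n).Nonempty) :
    dimH (univ.pi fun n ↦ (A n : Set (E n))) =
      liminf (fun n : ℕ ↦ ENNReal.ofReal
        (Real.logb 2 (∏ i ∈ Finset.range n, (A i).card : ℕ) / n)) atTop :=
  (dimH_univ_pi_le hA).antisymm (le_dimH_univ_pi hA)

end Product

open scoped Classical in
theorem setOf_forall_notMem_eq_univ_pi (M : Set ℕ) :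
    {x : ℕ → Bool | ∀ n : ℕ, n ∉ M → x n = false} =
      univ.pi fun n ↦ ((if n ∈ M then Finset.univ else {false} : Finset Bool) : Set Bool) := by
  ext x
  refine forall_congr' fun n ↦ ?_
  by_cases hn : n ∈ M <;> simp [hn]

open scoped Classical in
theorem prod_card_ite_mem (M : Set ℕ) (n : ℕ) :
    ∏ i ∈ Finset.range (n + 1), (if i ∈ M then Finset.univ else {false} : Finset Bool).card =
      2 ^ (M ∩ Iic n).ncard := by
  have hM : M ∩ Iic n = (Finset.range (n + 1)).filter (· ∈ M) := by
    ext i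
    simp [and_comm]
  rw [hM, ncard_coe_finset, ← Finset.prod_const, Finset.prod_filter]
  exact Finset.prod_congr rfl fun i _ ↦ by split_ifs <;> rfl

theorem dimH_FM_general (M : Set ℕ) :
    dimH {x : ℕ → Bool | ∀ n : ℕ, n ∉ M → x n = false} =
      liminf (fun n : ℕ ↦ ENNReal.ofReal (((M ∩ Iic n).ncard : ℝ) / (n + 1))) atTop := by
  classical
  rw [setOf_forall_notMem_eq_univ_pi, dimH_univ_pi fun n ↦ by split_ifs <;> simp,
    ← liminf_nat_add _ 1]
  simp only [prod_card_ite_mem, Nat.cast_pow, Nat.cast_ofNat, Real.logb_pow,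
    Real.logb_self_eq_one one_lt_two, mul_one, Nat.cast_add, Nat.cast_one]

/-- If `M ⊆ ℕ` has density `δ ∈ [0,1]`, then the set `F_M` of binary sequences vanishing
outside `M` has Hausdorff dimension `δ`. -/
theorem dimH_FM (M : Set ℕ) (δ : ℝ) (hδ : δ ∈ Set.Icc (0 : ℝ) 1)
    (hM : Tendsto (fun n : ℕ => ((M ∩ Set.Iic n).ncard : ℝ) / (n + 1)) atTop (nhds δ)) :
    dimH {x : ℕ → Bool | ∀ n : ℕ, n ∉ M → x n = false} = ENNReal.ofReal δ := by
  rw [dimH_FM_general, (ENNReal.tendsto_ofReal hM).liminf_eq]
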